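/- Let T > 0 and let V : ℝⁿ → ℝⁿ be Lipschitz continuous, V ∈ C⁵(ℝⁿ,ℝⁿ), with derivatives of order 5 locally Lipschitz with polynomially growing Lipschitz constants. Then there exists a continuous function h_V : ℝⁿ → ℝⁿ with polynomial growth such that for every p ≥ 1 there exist C > 0 and q ∈ ℕ* with: for all (θ,x) ∈ [0,T]×ℝⁿ, E[‖exp(G_θ V)x − Ψ₄^V(G_θ,x) − h_V(x)G_θ⁵‖^{2p}] ≤ C(1 + ‖x‖^{2q})θ^{6p}, where G_θ is a centered real Gaussian random variable with variance θ. -/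

import Mathlib

open MeasureTheory ProbabilityTheory

noncomputable section

/-- Euclidean space ℝⁿ. -/
abbrev Vec (n : ℕ) : Type := EuclideanSpace ℝ (Fin n)

/-- Classical fourth-order Runge–Kutta map `Ψ₄^V`. -/
def rk4 {n : ℕ} (V : Vec n → Vec n) (θ : ℝ) (x : Vec n) : Vec n :=
  x + (θ / 6) • (V x + (2 : ℝ) • V (x + (θ / 2) • V x)
    + (2 : ℝ) • V (x + (θ / 2) • V (x + (θ / 2) • V x))
    + V (x + θ • V (x + (θ / 2) • V (x + (θ / 2) • V x))))

/-- `φ` is the flow of the vector field `V` : `φ θ x = exp(θV)x`. -/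
def IsFlow {n : ℕ} (V : Vec n → Vec n) (φ : ℝ → Vec n → Vec n) : Prop :=
  (∀ x, φ 0 x = x) ∧ ∀ (x : Vec n) (t : ℝ), HasDerivAt (fun s => φ s x) (V (φ t x)) t

/-- `D` is locally Lipschitz with polynomially growing Lipschitz constant. -/
def PolyLocLip {E F : Type*} [NormedAddCommGroup E] [NormedAddCommGroup F]
    (D : E → F) : Prop :=
  ∃ K : ℝ, 0 ≤ K ∧ ∃ r : ℕ, ∀ x y, ‖D x - D y‖ ≤ K * (1 + ‖x‖ ^ r + ‖y‖ ^ r) * ‖x - y‖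

/-!
Consider maps of `(θ, x)` that have an expansion in powers of `θ` whose remainder is controlled by a
power of the weight `exp |θ| * (1 + ‖x‖)`. Composing such a map with `V` again gives one, with
coefficients read off from the Taylor series of `V`. For the flow, which has an expansion of order
`0` by Grönwall's inequality, the equation `y' = V y` therefore gains one order at a time; for the
Runge–Kutta map one composes four times. The coefficients of the two agree up to `θ ^ 4`, so that
`φ θ x - Ψ₄ θ x = θ ^ 5 • h x + O(θ ^ 6)`, where `h` is the difference of the coefficients of
`θ ^ 5`. As the weight has Gaussian moments of every order, rescaling `G_θ = √θ G_1` bounds the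
`2p`-th moment of the remainder by a multiple of `(√θ) ^ (12 p) = θ ^ (6 p)`.
-/

section Tempered

variable {P E F : Type*} [NormedAddCommGroup P] [NormedAddCommGroup E] [NormedAddCommGroup F]

/-- Polynomial growth, with the weight `1 + ‖x‖ ^ r`. -/
def HasPolyGrowth (f : P → E) : Prop :=
  ∃ K : ℝ, 0 ≤ K ∧ ∃ r : ℕ, ∀ x, ‖f x‖ ≤ K * (1 + ‖x‖ ^ r)

/-- The weight against which remainders in `(θ, x)` are measured. It grows exponentially in `θ`,
as Lipschitz flows do, and still has Gaussian moments of every order. -/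
def temperedWeight (θ : ℝ) (x : P) : ℝ := Real.exp |θ| * (1 + ‖x‖)

/-- `f θ x = O(θ ^ k)` for all `θ ∈ ℝ`, uniformly in `x` up to a power of `temperedWeight θ x`. -/
def IsTemperedBigO (k : ℕ) (f : ℝ → P → E) : Prop :=
  ∃ C : ℝ, 0 ≤ C ∧ ∃ r : ℕ, ∀ θ x, ‖f θ x‖ ≤ C * |θ| ^ k * temperedWeight θ x ^ r

/-- Continuous functions of polynomial growth, the class in which expansion coefficients live. -/
structure IsTempered (f : P → E) : Prop where
  continuous : Continuous f
  hasPolyGrowth : HasPolyGrowth f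

lemma one_le_temperedWeight (θ : ℝ) (x : P) : 1 ≤ temperedWeight θ x :=
  one_le_mul_of_one_le_of_one_le (Real.one_le_exp (abs_nonneg θ)) (by simp)

lemma abs_le_temperedWeight (θ : ℝ) (x : P) : |θ| ≤ temperedWeight θ x :=
  calc |θ| ≤ Real.exp |θ| := by linarith [Real.add_one_le_exp |θ|]
    _ ≤ temperedWeight θ x := le_mul_of_one_le_right (Real.exp_nonneg _) (by simp)

lemma one_add_norm_le_temperedWeight (θ : ℝ) (x : P) : 1 + ‖x‖ ≤ temperedWeight θ x :=
  le_mul_of_one_le_left (by positivity) (Real.one_le_exp (abs_nonneg θ))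

lemma temperedWeight_mono {s θ : ℝ} (h : |s| ≤ |θ|) (x : P) :
    temperedWeight s x ≤ temperedWeight θ x := by
  unfold temperedWeight
  gcongr

namespace IsTemperedBigO

variable {j k : ℕ}

lemma of_norm_le {f : ℝ → P → E} {g : ℝ → P → F} (hg : IsTemperedBigO k g)
    (hfg : ∀ θ x, ‖f θ x‖ ≤ ‖g θ x‖) : IsTemperedBigO k f := by
  obtain ⟨C, hC, r, hbound⟩ := hg
  exact ⟨C, hC, r, fun θ x ↦ (hfg θ x).trans (hbound θ x)⟩

lemma mono {f : ℝ → P → E} (hf : IsTemperedBigO k f) (hjk : j ≤ k) : IsTemperedBigO j f := by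
  obtain ⟨C, hC, r, hbound⟩ := hf
  refine ⟨C, hC, (k - j) + r, fun θ x ↦ (hbound θ x).trans ?_⟩
  have hweight := one_le_temperedWeight θ x
  calc C * |θ| ^ k * temperedWeight θ x ^ r
      = C * |θ| ^ j * (|θ| ^ (k - j) * temperedWeight θ x ^ r) := by
        rw [← pow_mul_pow_sub |θ| hjk]; ring
    _ ≤ C * |θ| ^ j * (temperedWeight θ x ^ (k - j) * temperedWeight θ x ^ r) := by
        gcongr; exact abs_le_temperedWeight θ x
    _ = C * |θ| ^ j * temperedWeight θ x ^ (k - j + r) := by rw [pow_add]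

lemma norm {f : ℝ → P → E} (hf : IsTemperedBigO k f) : IsTemperedBigO k fun θ x ↦ ‖f θ x‖ :=
  hf.of_norm_le fun θ x ↦ (norm_norm (f θ x)).le

lemma const (c : E) : IsTemperedBigO 0 fun (_ : ℝ) (_ : P) ↦ c :=
  ⟨‖c‖, norm_nonneg c, 0, fun θ x ↦ by simp⟩

lemma id : IsTemperedBigO 0 fun (_ : ℝ) (x : P) ↦ x :=
  ⟨1, zero_le_one, 1, fun θ x ↦ by
    simpa using (le_add_of_nonneg_left zero_le_one).trans (one_add_norm_le_temperedWeight θ x)⟩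

lemma zero : IsTemperedBigO k fun (_ : ℝ) (_ : P) ↦ (0 : E) :=
  ⟨0, le_rfl, 0, fun θ x ↦ by simp⟩

lemma add {f g : ℝ → P → E} (hf : IsTemperedBigO k f) (hg : IsTemperedBigO k g) :
    IsTemperedBigO k fun θ x ↦ f θ x + g θ x := by
  obtain ⟨C, hC, r, hfbound⟩ := hf
  obtain ⟨D, hD, s, hgbound⟩ := hg
  refine ⟨C + D, add_nonneg hC hD, max r s, fun θ x ↦ ?_⟩
  have hweight := one_le_temperedWeight θ x
  calc ‖f θ x + g θ x‖
      ≤ C * |θ| ^ k * temperedWeight θ x ^ r + D * |θ| ^ k * temperedWeight θ x ^ s :=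
        norm_add_le_of_le (hfbound θ x) (hgbound θ x)
    _ ≤ C * |θ| ^ k * temperedWeight θ x ^ max r s
          + D * |θ| ^ k * temperedWeight θ x ^ max r s := by
        gcongr
        exacts [le_max_left r s, le_max_right r s]
    _ = (C + D) * |θ| ^ k * temperedWeight θ x ^ max r s := by ring

lemma sum {ι : Type*} (s : Finset ι) {f : ι → ℝ → P → E}
    (hf : ∀ i ∈ s, IsTemperedBigO k (f i)) : IsTemperedBigO k fun θ x ↦ ∑ i ∈ s, f i θ x := by
  classical
  induction s using Finset.induction_on with
  | empty => simpa using zero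
  | insert i s hi ih =>
    simp only [Finset.sum_insert hi]
    exact (hf i (Finset.mem_insert_self i s)).add
      (ih fun l hl ↦ hf l (Finset.mem_insert_of_mem hl))

lemma smul [NormedSpace ℝ E] {f : ℝ → P → ℝ} {g : ℝ → P → E} (hf : IsTemperedBigO j f)
    (hg : IsTemperedBigO k g) : IsTemperedBigO (j + k) fun θ x ↦ f θ x • g θ x := by
  obtain ⟨C, hC, r, hfbound⟩ := hf
  obtain ⟨D, hD, s, hgbound⟩ := hg
  refine ⟨C * D, mul_nonneg hC hD, r + s, fun θ x ↦ ?_⟩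
  have hweight := one_le_temperedWeight θ x
  calc ‖f θ x • g θ x‖
      = ‖f θ x‖ * ‖g θ x‖ := norm_smul _ _
    _ ≤ (C * |θ| ^ j * temperedWeight θ x ^ r) * (D * |θ| ^ k * temperedWeight θ x ^ s) :=
        mul_le_mul (hfbound θ x) (hgbound θ x) (norm_nonneg _) (by positivity)
    _ = C * D * |θ| ^ (j + k) * temperedWeight θ x ^ (r + s) := by ring

lemma const_smul [NormedSpace ℝ E] (c : ℝ) {f : ℝ → P → E} (hf : IsTemperedBigO k f) :
    IsTemperedBigO k fun θ x ↦ c • f θ x := by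
  simpa using (const c).smul hf

lemma pow_smul [NormedSpace ℝ E] (j : ℕ) {f : ℝ → P → E} (hf : IsTemperedBigO k f) :
    IsTemperedBigO (j + k) fun θ x ↦ θ ^ j • f θ x := by
  have hpow : IsTemperedBigO j fun (θ : ℝ) (_ : P) ↦ θ ^ j :=
    ⟨1, zero_le_one, 0, fun θ x ↦ by simp⟩
  exact hpow.smul hf

lemma prod {ι : Type*} (s : Finset ι) {k : ι → ℕ} {f : ι → ℝ → P → ℝ}
    (hf : ∀ i ∈ s, IsTemperedBigO (k i) (f i)) :
    IsTemperedBigO (∑ i ∈ s, k i) fun θ x ↦ ∏ i ∈ s, f i θ x := by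
  classical
  induction s using Finset.induction_on with
  | empty => simpa using const (1 : ℝ)
  | insert i s hi ih =>
    simp only [Finset.prod_insert hi, Finset.sum_insert hi]
    exact (hf i (Finset.mem_insert_self i s)).smul
      (ih fun l hl ↦ hf l (Finset.mem_insert_of_mem hl))

lemma pow {f : ℝ → P → ℝ} (hf : IsTemperedBigO k f) (n : ℕ) :
    IsTemperedBigO (n * k) fun θ x ↦ f θ x ^ n := by
  simpa using prod (Finset.range n) fun _ _ ↦ hf

lemma multilinear_apply [NormedSpace ℝ E] [NormedSpace ℝ F] {n : ℕ} {k : Fin n → ℕ}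
    {A : ℝ → P → E [×n]→L[ℝ] F} (hA : IsTemperedBigO j A) {u : Fin n → ℝ → P → E}
    (hu : ∀ l, IsTemperedBigO (k l) (u l)) :
    IsTemperedBigO (j + ∑ l, k l) fun θ x ↦ A θ x fun l ↦ u l θ x :=
  (hA.norm.smul (prod Finset.univ fun l _ ↦ (hu l).norm)).of_norm_le fun θ x ↦
    ((A θ x).le_opNorm _).trans (le_abs_self _)

lemma multilinear_apply_sub [NormedSpace ℝ E] [NormedSpace ℝ F] {n : ℕ}
    {A : ℝ → P → E [×n]→L[ℝ] F} (hA : IsTemperedBigO j A) {u v : ℝ → P → E}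
    (hu : IsTemperedBigO 0 u) (hv : IsTemperedBigO 0 v)
    (huv : IsTemperedBigO k fun θ x ↦ u θ x - v θ x) :
    IsTemperedBigO (j + k) fun θ x ↦ A θ x (fun _ ↦ u θ x) - A θ x fun _ ↦ v θ x := by
  have hbound := ((hA.norm.smul (.const (n : ℝ))).smul
    ((hu.norm.add hv.norm).pow (n - 1))).smul huv.norm
  refine IsTemperedBigO.of_norm_le (by simpa only [add_zero, mul_zero] using hbound) fun θ x ↦ ?_
  calc ‖A θ x (fun _ ↦ u θ x) - A θ x fun _ ↦ v θ x‖
      ≤ ‖A θ x‖ * n * max ‖fun _ : Fin n ↦ u θ x‖ ‖fun _ : Fin n ↦ v θ x‖ ^ (n - 1)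
        * ‖fun _ : Fin n ↦ u θ x - v θ x‖ := by
        simpa [Pi.sub_def] using (A θ x).norm_image_sub_le (fun _ ↦ u θ x) fun _ ↦ v θ x
    _ ≤ ‖A θ x‖ * n * (‖u θ x‖ + ‖v θ x‖) ^ (n - 1) * ‖u θ x - v θ x‖ := by
        gcongr
        · exact max_le ((pi_norm_const_le _).trans (le_add_of_nonneg_right (norm_nonneg _)))
            ((pi_norm_const_le _).trans (le_add_of_nonneg_left (norm_nonneg _)))
        · exact pi_norm_const_le _
    _ ≤ _ := le_abs_self _

lemma exp_mul_abs (a : ℝ) : IsTemperedBigO 0 fun (θ : ℝ) (_ : P) ↦ Real.exp (a * |θ|) := by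
  obtain ⟨n, hn⟩ := exists_nat_ge a
  refine ⟨1, zero_le_one, n, fun θ x ↦ ?_⟩
  calc ‖Real.exp (a * |θ|)‖
      = Real.exp (a * |θ|) := Real.norm_of_nonneg (Real.exp_nonneg _)
    _ ≤ Real.exp (n * |θ|) := by gcongr
    _ = Real.exp |θ| ^ n := Real.exp_nat_mul _ _
    _ ≤ temperedWeight θ x ^ n := by
        gcongr
        exact le_mul_of_one_le_right (Real.exp_nonneg _) (by simp)
    _ = 1 * |θ| ^ 0 * temperedWeight θ x ^ n := by ring

end IsTemperedBigO

lemma one_add_pow_le_mul_one_add_pow {y : ℝ} (hy : 0 ≤ y) {r s : ℕ} (hrs : r ≤ s) :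
    (1 + y) ^ r ≤ 2 ^ (s - 1) * (1 + y ^ s) :=
  calc (1 + y) ^ r ≤ (1 + y) ^ s := pow_le_pow_right₀ (by linarith) hrs
    _ ≤ 2 ^ (s - 1) * (1 + y ^ s) := by simpa using add_pow_le zero_le_one hy s

lemma HasPolyGrowth.isTemperedBigO {f : P → E} (hf : HasPolyGrowth f) :
    IsTemperedBigO 0 fun _ ↦ f := by
  obtain ⟨K, -, r, hbound⟩ := hf
  refine ((IsTemperedBigO.const K).smul
    ((IsTemperedBigO.const 1).add (IsTemperedBigO.id.norm.pow r))).of_norm_le fun _ x ↦ ?_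
  exact (hbound x).trans (le_abs_self _)

lemma IsTemperedBigO.hasPolyGrowth {f : P → E} (hf : IsTemperedBigO 0 fun _ ↦ f) :
    HasPolyGrowth f := by
  obtain ⟨C, hC, r, hbound⟩ := hf
  refine ⟨C * 2 ^ (r - 1), by positivity, r, fun x ↦ ?_⟩
  calc ‖f x‖ ≤ C * (1 + ‖x‖) ^ r := by simpa [temperedWeight] using hbound 0 x
    _ ≤ C * (2 ^ (r - 1) * (1 + ‖x‖ ^ r)) := by
        gcongr
        exact one_add_pow_le_mul_one_add_pow (norm_nonneg x) le_rfl
    _ = C * 2 ^ (r - 1) * (1 + ‖x‖ ^ r) := (mul_assoc _ _ _).symm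

lemma HasPolyGrowth.exists_isTemperedBigO_bound {g : E → F} (hg : HasPolyGrowth g)
    {R : ℝ → P → ℝ} (hR : IsTemperedBigO 0 R) :
    ∃ B : ℝ → P → ℝ, IsTemperedBigO 0 B ∧ ∀ θ x y, ‖y‖ ≤ R θ x → ‖g y‖ ≤ B θ x := by
  obtain ⟨K, hK, r, hbound⟩ := hg
  refine ⟨fun θ x ↦ K * (1 + R θ x ^ r),
    (IsTemperedBigO.const K).smul ((IsTemperedBigO.const 1).add (hR.pow r)), fun θ x y hy ↦ ?_⟩
  calc ‖g y‖ ≤ K * (1 + ‖y‖ ^ r) := hbound y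
    _ ≤ K * (1 + R θ x ^ r) := by gcongr

lemma HasPolyGrowth.comp_isTemperedBigO {g : E → F} (hg : HasPolyGrowth g) {f : ℝ → P → E}
    (hf : IsTemperedBigO 0 f) : IsTemperedBigO 0 fun θ x ↦ g (f θ x) := by
  obtain ⟨B, hB, hbound⟩ := hg.exists_isTemperedBigO_bound hf.norm
  exact hB.of_norm_le fun θ x ↦ (hbound θ x _ le_rfl).trans (le_abs_self _)

lemma hasPolyGrowth_of_norm_sub_zero_le {f : P → E} {R : P → ℝ} (hR : HasPolyGrowth R)
    (hf : ∀ x, ‖f x - f 0‖ ≤ R x * ‖x‖) : HasPolyGrowth f := by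
  refine (((IsTemperedBigO.const ‖f 0‖).add
    (hR.isTemperedBigO.smul IsTemperedBigO.id.norm)).of_norm_le fun _ x ↦ ?_).hasPolyGrowth
  calc ‖f x‖ ≤ ‖f 0‖ + ‖f x - f 0‖ := norm_le_norm_add_norm_sub' _ _
    _ ≤ ‖f 0‖ + R x * ‖x‖ := by gcongr; exact hf x
    _ ≤ ‖‖f 0‖ + R x * ‖x‖‖ := le_abs_self _

lemma PolyLocLip.hasPolyGrowth {f : P → E} (hf : PolyLocLip f) : HasPolyGrowth f := by
  obtain ⟨K, -, r, hbound⟩ := hf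
  have hconst : HasPolyGrowth fun x : P ↦ K * (1 + ‖x‖ ^ r + ‖(0 : P)‖ ^ r) :=
    ((IsTemperedBigO.const K).smul (((IsTemperedBigO.const 1).add
      (IsTemperedBigO.id.norm.pow r)).add (IsTemperedBigO.const _))).hasPolyGrowth
  exact hasPolyGrowth_of_norm_sub_zero_le hconst fun x ↦ by simpa only [sub_zero] using hbound x 0

namespace IsTempered

lemma isTemperedBigO {f : P → E} (hf : IsTempered f) : IsTemperedBigO 0 fun _ ↦ f :=
  hf.hasPolyGrowth.isTemperedBigO

lemma const (c : E) : IsTempered fun _ : P ↦ c :=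
  ⟨continuous_const, (IsTemperedBigO.const c).hasPolyGrowth⟩

lemma id : IsTempered fun x : P ↦ x :=
  ⟨continuous_id, IsTemperedBigO.id.hasPolyGrowth⟩

lemma add {f g : P → E} (hf : IsTempered f) (hg : IsTempered g) : IsTempered (f + g) :=
  ⟨hf.continuous.add hg.continuous,
    (hf.isTemperedBigO.add hg.isTemperedBigO).hasPolyGrowth⟩

lemma const_smul [NormedSpace ℝ E] (c : ℝ) {f : P → E} (hf : IsTempered f) :
    IsTempered (c • f) :=
  ⟨hf.continuous.const_smul c, (hf.isTemperedBigO.const_smul c).hasPolyGrowth⟩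

lemma sum {ι : Type*} (s : Finset ι) {f : ι → P → E} (hf : ∀ i ∈ s, IsTempered (f i)) :
    IsTempered fun x ↦ ∑ i ∈ s, f i x :=
  ⟨continuous_finsetSum s fun i hi ↦ (hf i hi).continuous, (IsTemperedBigO.sum s fun i hi ↦
    (hf i hi).isTemperedBigO).hasPolyGrowth⟩

lemma comp {g : E → F} {f : P → E} (hg : IsTempered g) (hf : IsTempered f) :
    IsTempered fun x ↦ g (f x) :=
  ⟨hg.continuous.comp hf.continuous,
    (hg.hasPolyGrowth.comp_isTemperedBigO hf.isTemperedBigO).hasPolyGrowth⟩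

lemma multilinear_apply [NormedSpace ℝ E] [NormedSpace ℝ F] {k : ℕ} {A : P → E [×k]→L[ℝ] F}
    (hA : IsTempered A) {u : Fin k → P → E} (hu : ∀ l, IsTempered (u l)) :
    IsTempered fun x ↦ A x fun l ↦ u l x :=
  ⟨hA.continuous.eval (continuous_pi fun l ↦ (hu l).continuous), IsTemperedBigO.hasPolyGrowth <| by
    simpa using hA.isTemperedBigO.multilinear_apply fun l ↦ (hu l).isTemperedBigO⟩

end IsTempered

end Tempered

section Derivatives

variable {E F : Type*} [NormedAddCommGroup E] [NormedSpace ℝ E] [NormedAddCommGroup F]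
  [NormedSpace ℝ F] {V : E → F} {k n N : ℕ}

/-- Maps of class `C^N` whose `N`-th derivative, and hence every lower one, grows polynomially. -/
structure HasTemperedDeriv (N : ℕ) (V : E → F) : Prop where
  contDiff : ContDiff ℝ N V
  hasPolyGrowth : HasPolyGrowth (iteratedFDeriv ℝ N V)

namespace HasTemperedDeriv

lemma of_succ (hV : HasTemperedDeriv (N + 1) V) : HasTemperedDeriv N V := by
  have hlt : (N : WithTop ℕ∞) < (N + 1 : ℕ) := mod_cast N.lt_succ_self
  refine ⟨hV.contDiff.of_le hlt.le, ?_⟩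
  obtain ⟨K, hK, r, hbound⟩ := hV.hasPolyGrowth
  refine hasPolyGrowth_of_norm_sub_zero_le (R := fun x ↦ K * (1 + ‖x‖ ^ r))
    ⟨K, hK, r, fun x ↦ (Real.norm_of_nonneg (by positivity)).le⟩ fun x ↦ ?_
  have hball : ∀ y ∈ Metric.closedBall (0 : E) ‖x‖,
      ‖fderiv ℝ (iteratedFDeriv ℝ N V) y‖ ≤ K * (1 + ‖x‖ ^ r) := fun y hy ↦ by
    rw [mem_closedBall_zero_iff] at hy
    rw [norm_fderiv_iteratedFDeriv]
    exact (hbound y).trans (by gcongr)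
  simpa using (convex_closedBall (0 : E) ‖x‖).norm_image_sub_le_of_norm_fderiv_le
    (fun y _ ↦ hV.contDiff.differentiable_iteratedFDeriv hlt y) hball
    (Metric.mem_closedBall_self (norm_nonneg x)) (mem_closedBall_zero_iff.2 le_rfl)

lemma of_le (hV : HasTemperedDeriv N V) (hkN : k ≤ N) : HasTemperedDeriv k V :=
  Nat.decreasingInduction (motive := fun k _ ↦ HasTemperedDeriv k V) (fun _ _ ↦ of_succ) hV hkN

lemma isTempered_iteratedFDeriv (hV : HasTemperedDeriv N V) (hkN : k ≤ N) :
    IsTempered (iteratedFDeriv ℝ k V) :=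
  ⟨hV.contDiff.continuous_iteratedFDeriv (mod_cast hkN), (hV.of_le hkN).hasPolyGrowth⟩

lemma isTempered (hV : HasTemperedDeriv N V) : IsTempered V := by
  obtain ⟨K, hK, r, hbound⟩ := (hV.of_le N.zero_le).hasPolyGrowth
  exact ⟨hV.contDiff.continuous, K, hK, r, fun x ↦ by simpa using hbound x⟩

end HasTemperedDeriv

lemma norm_sub_sum_iteratedFDeriv_le [CompleteSpace F] (hV : ContDiff ℝ (n + 1) V) {x y : E}
    {C : ℝ} (hC : ∀ t ∈ Set.Icc (0 : ℝ) 1, ‖iteratedFDeriv ℝ (n + 1) V (x + t • y)‖ ≤ C) :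
    ‖V (x + y) - ∑ k ∈ Finset.range (n + 1),
        (k.factorial : ℝ)⁻¹ • iteratedFDeriv ℝ k V x fun _ ↦ y‖ ≤ C * ‖y‖ ^ (n + 1) := by
  have : 0 ≤ C := (norm_nonneg _).trans (hC 0 ⟨le_rfl, zero_le_one⟩)
  have hintegrand : ∀ t ∈ Set.uIoc (0 : ℝ) 1,
      ‖(1 - t) ^ n • iteratedFDeriv ℝ (n + 1) V (x + t • y) fun _ ↦ y‖
        ≤ C * ‖y‖ ^ (n + 1) := fun t ht ↦ by
    obtain ⟨h0, h1⟩ := Set.uIoc_of_le (zero_le_one' ℝ) ▸ ht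
    have hpow : |1 - t| ^ n ≤ 1 := pow_le_one₀ (abs_nonneg _) (abs_le.2 ⟨by linarith, by linarith⟩)
    calc ‖(1 - t) ^ n • iteratedFDeriv ℝ (n + 1) V (x + t • y) fun _ ↦ y‖
        = |1 - t| ^ n * ‖iteratedFDeriv ℝ (n + 1) V (x + t • y) fun _ ↦ y‖ := by
          rw [norm_smul, norm_pow, Real.norm_eq_abs]
      _ ≤ 1 * (C * ‖y‖ ^ (n + 1)) := by
          gcongr
          simpa using (iteratedFDeriv ℝ (n + 1) V (x + t • y)).le_of_opNorm_le
            (hC t ⟨h0.le, h1⟩) fun _ ↦ y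
      _ = C * ‖y‖ ^ (n + 1) := one_mul _
  have hfact : ((n.factorial : ℝ))⁻¹ ≤ 1 :=
    inv_le_one_of_one_le₀ (mod_cast n.factorial_pos)
  rw [map_add_eq_sum_add_integral_iteratedFDeriv fun t _ ↦ hV.contDiffAt, add_sub_cancel_left,
    norm_smul, Real.norm_of_nonneg (by positivity)]
  calc _ ≤ 1 * (C * ‖y‖ ^ (n + 1)) := by
        gcongr
        simpa using intervalIntegral.norm_integral_le_of_norm_le_const hintegrand
    _ = C * ‖y‖ ^ (n + 1) := one_mul _

end Derivatives

section Expansion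

open Finset

variable {P E F : Type*} [NormedAddCommGroup P] [NormedAddCommGroup E] [NormedSpace ℝ E]
  [NormedAddCommGroup F] [NormedSpace ℝ F]

/-- `f θ x = ∑ i < m, θ ^ i • a i x + O(θ ^ m)` with tempered coefficients and remainder. The
values `a i` for `i ≥ m` are irrelevant. -/
structure HasExpansion (m : ℕ) (f : ℝ → P → E) (a : ℕ → P → E) : Prop where
  isTempered_coeff : ∀ i < m, IsTempered (a i)
  isTemperedBigO_sub : IsTemperedBigO m fun θ x ↦ f θ x - ∑ i ∈ range m, θ ^ i • a i x

namespace HasExpansion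

variable {j m : ℕ} {f g : ℝ → P → E} {a b : ℕ → P → E}

lemma isTemperedBigO_sum (ha : ∀ i < m, IsTempered (a i)) :
    IsTemperedBigO 0 fun (θ : ℝ) x ↦ ∑ i ∈ range m, θ ^ i • a i x :=
  .sum _ fun i hi ↦ ((ha i (mem_range.1 hi)).isTemperedBigO.pow_smul i).mono (Nat.zero_le _)

lemma isTemperedBigO (hf : HasExpansion m f a) : IsTemperedBigO 0 f := by
  simpa using (hf.isTemperedBigO_sub.mono m.zero_le).add (isTemperedBigO_sum hf.isTempered_coeff)

lemma of_succ (hf : HasExpansion (m + 1) f a) : HasExpansion m f a := by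
  refine ⟨fun i hi ↦ hf.isTempered_coeff i (hi.trans m.lt_succ_self), ?_⟩
  have hterm := (hf.isTempered_coeff m m.lt_succ_self).isTemperedBigO.pow_smul m
  convert (hf.isTemperedBigO_sub.mono m.le_succ).add hterm using 3 with θ x
  rw [sum_range_succ]
  abel

lemma of_le (hf : HasExpansion m f a) (hjm : j ≤ m) : HasExpansion j f a :=
  Nat.decreasingInduction (motive := fun j _ ↦ HasExpansion j f a) (fun _ _ ↦ of_succ) hf hjm

lemma add (hf : HasExpansion m f a) (hg : HasExpansion m g b) :
    HasExpansion m (fun θ x ↦ f θ x + g θ x) (a + b) := by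
  refine ⟨fun i hi ↦ (hf.isTempered_coeff i hi).add (hg.isTempered_coeff i hi), ?_⟩
  convert hf.isTemperedBigO_sub.add hg.isTemperedBigO_sub using 3 with θ x
  simp only [Pi.add_apply, smul_add, sum_add_distrib]
  abel

lemma const_smul (c : ℝ) (hf : HasExpansion m f a) :
    HasExpansion m (fun θ x ↦ c • f θ x) (c • a) := by
  refine ⟨fun i hi ↦ (hf.isTempered_coeff i hi).const_smul c, ?_⟩
  convert hf.isTemperedBigO_sub.const_smul c using 3 with θ x
  simp only [Pi.smul_apply, smul_sub, smul_sum, smul_comm c]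

lemma sub (hf : HasExpansion m f a) (hg : HasExpansion m g b) :
    HasExpansion m (fun θ x ↦ f θ x - g θ x) (a - b) := by
  simpa [sub_eq_add_neg] using hf.add (hg.const_smul (-1))

lemma sum {ι : Type*} (s : Finset ι) {f : ι → ℝ → P → E} {a : ι → ℕ → P → E}
    (hf : ∀ k ∈ s, HasExpansion m (f k) (a k)) :
    HasExpansion m (fun θ x ↦ ∑ k ∈ s, f k θ x) fun i x ↦ ∑ k ∈ s, a k i x := by
  refine ⟨fun i hi ↦ .sum s fun k hk ↦ (hf k hk).isTempered_coeff i hi, ?_⟩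
  convert IsTemperedBigO.sum s fun k hk ↦ (hf k hk).isTemperedBigO_sub using 3 with θ x
  rw [sum_sub_distrib, sum_comm]
  simp only [smul_sum]

lemma const {c : P → E} (hc : IsTempered c) (m : ℕ) :
    HasExpansion m (fun _ ↦ c) (Pi.single 0 c) := by
  have hcoeff : ∀ i, IsTempered ((Pi.single 0 c : ℕ → P → E) i)
    | 0 => hc
    | _ + 1 => .const 0
  refine ⟨fun i _ ↦ hcoeff i, ?_⟩
  cases m with
  | zero => simpa using hc.isTemperedBigO
  | succ m =>
    convert IsTemperedBigO.zero using 3 with θ x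
    simp [sum_range_succ']

lemma isTemperedBigO_sub_of_coeff_eq_zero (hf : HasExpansion (m + 1) f a)
    (ha : ∀ i < m, a i = 0) : IsTemperedBigO (m + 1) fun θ x ↦ f θ x - θ ^ m • a m x := by
  have hsum : ∀ (θ : ℝ) x, ∑ i ∈ range (m + 1), θ ^ i • a i x = θ ^ m • a m x := fun θ x ↦ by
    rw [sum_range_succ, add_eq_right]
    exact sum_eq_zero fun i hi ↦ by simp [ha i (mem_range.1 hi)]
  simpa only [hsum] using hf.isTemperedBigO_sub

end HasExpansion

section Multilinear

variable {E F : Type*} [NormedAddCommGroup E] [NormedSpace ℝ E] [NormedAddCommGroup F]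
  [NormedSpace ℝ F] {k : ℕ}

lemma multilinear_sum_pow_smul (A : E [×k]→L[ℝ] F) (u : ℕ → E) (θ : ℝ) (m : ℕ) :
    A (fun _ ↦ ∑ i ∈ range m, θ ^ i • u i)
      = ∑ j ∈ Fintype.piFinset fun _ : Fin k ↦ range m, θ ^ (∑ l, j l) • A fun l ↦ u (j l) := by
  rw [A.map_sum_finset]
  refine sum_congr rfl fun j _ ↦ ?_
  rw [A.map_smul_univ, prod_pow_eq_pow_sum]

lemma piFinset_range_filter_sum_eq {i m : ℕ} (hi : i < m) :
    {j ∈ Fintype.piFinset fun _ : Fin k ↦ range m | ∑ l, j l = i} = Nat.antidiagonalTuple k i := by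
  ext j
  simp only [mem_filter, Fintype.mem_piFinset, mem_range, Nat.mem_antidiagonalTuple,
    and_iff_right_iff_imp]
  rintro rfl l
  exact (single_le_sum (fun _ _ ↦ Nat.zero_le _) (mem_univ l)).trans_lt hi

lemma multilinear_sum_pow_smul_sub (A : E [×k]→L[ℝ] F) (u : ℕ → E) (θ : ℝ) (m : ℕ) :
    A (fun _ ↦ ∑ i ∈ range m, θ ^ i • u i)
        - ∑ i ∈ range m, θ ^ i • ∑ j ∈ Nat.antidiagonalTuple k i, A (fun l ↦ u (j l))
      = ∑ j ∈ Fintype.piFinset fun _ : Fin k ↦ range m with ¬ ∑ l, j l < m,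
          θ ^ (∑ l, j l) • A fun l ↦ u (j l) := by
  have hlow : ∑ i ∈ range m, θ ^ i • ∑ j ∈ Nat.antidiagonalTuple k i, A (fun l ↦ u (j l))
      = ∑ j ∈ Fintype.piFinset fun _ : Fin k ↦ range m with ∑ l, j l < m,
          θ ^ (∑ l, j l) • A fun l ↦ u (j l) := by
    rw [← sum_fiberwise_of_maps_to (t := range m) (g := fun j : Fin k → ℕ ↦ ∑ l, j l)
      fun j hj ↦ mem_range.2 (mem_filter.1 hj).2]
    refine sum_congr rfl fun i hi ↦ ?_
    rw [filter_filter, smul_sum, ← piFinset_range_filter_sum_eq (mem_range.1 hi)]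
    refine sum_congr (filter_congr fun j _ ↦ ?_) fun j hj ↦ by rw [(mem_filter.1 hj).2.2]
    exact ⟨fun h ↦ ⟨h.trans_lt (mem_range.1 hi), h⟩, And.right⟩
  rw [multilinear_sum_pow_smul, hlow, sub_eq_iff_eq_add', sum_filter_add_sum_filter_not]

lemma exists_eq_zero_or_eq_succ (j : Fin k → ℕ) :
    (∃ l, j l = 0) ∨ ∃ j' : Fin k → ℕ, j = fun l ↦ j' l + 1 := by
  by_cases! h : ∃ l, j l = 0
  · exact .inl h
  · exact .inr ⟨fun l ↦ j l - 1, funext fun l ↦ (Nat.succ_pred (h l)).symm⟩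

lemma sum_antidiagonalTuple_of_map_zero (A : E [×k]→L[ℝ] F) {u : ℕ → E} (hu : u 0 = 0) {i : ℕ}
    (hki : k ≤ i) :
    ∑ j ∈ Nat.antidiagonalTuple k i, A (fun l ↦ u (j l))
      = ∑ j ∈ Nat.antidiagonalTuple k (i - k), A fun l ↦ u (j l + 1) := by
  symm
  refine sum_of_injOn (fun j l ↦ j l + 1) (fun j _ j' _ h ↦ ?_) (fun j hj ↦ ?_) (fun j hj hne ↦ ?_)
    fun _ _ ↦ rfl
  · exact funext fun l ↦ Nat.succ_injective (congrFun h l)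
  · rw [mem_coe, Nat.mem_antidiagonalTuple] at hj ⊢
    simp [sum_add_distrib, hj, hki]
  · obtain ⟨l, hl⟩ | ⟨j', rfl⟩ := exists_eq_zero_or_eq_succ j
    · exact A.map_coord_zero l (by rw [hl, hu])
    · refine absurd ⟨j', ?_, rfl⟩ hne
      rw [mem_coe, Nat.mem_antidiagonalTuple, ← Nat.mem_antidiagonalTuple.1 hj]
      simp [sum_add_distrib]

lemma sum_antidiagonalTuple_eq_zero_of_lt (A : E [×k]→L[ℝ] F) {u : ℕ → E} (hu : u 0 = 0) {i : ℕ}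
    (hik : i < k) : ∑ j ∈ Nat.antidiagonalTuple k i, A (fun l ↦ u (j l)) = 0 := by
  refine sum_eq_zero fun j hj ↦ ?_
  obtain ⟨l, hl⟩ | ⟨j', rfl⟩ := exists_eq_zero_or_eq_succ j
  · exact A.map_coord_zero l (by rw [hl, hu])
  · have hsum := Nat.mem_antidiagonalTuple.1 hj
    simp only [sum_add_distrib, sum_const, card_univ, Fintype.card_fin, smul_eq_mul] at hsum
    omega

/-- The coefficients of `V ∘ γ` when `γ` has coefficients `b`, obtained by substituting
`γ - b 0 = ∑ i ≥ 1, θ ^ i • b i` into the Taylor series of `V` at `b 0`; the indices `j l + 1` run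
over the compositions of `i` into `k` positive parts. -/
def compCoeff {P : Type*} (V : E → F) (b : ℕ → P → E) (i : ℕ) (x : P) : F :=
  ∑ k ∈ range (i + 1), (k.factorial : ℝ)⁻¹ • ∑ j ∈ Nat.antidiagonalTuple k (i - k),
    iteratedFDeriv ℝ k V (b 0 x) fun l ↦ b (j l + 1) x

lemma compCoeff_eq_sum_range {P : Type*} (V : E → F) (b : ℕ → P → E) {i m : ℕ} (hi : i < m)
    (x : P) :
    compCoeff V b i x = ∑ k ∈ range m, (k.factorial : ℝ)⁻¹ • ∑ j ∈ Nat.antidiagonalTuple k i,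
      iteratedFDeriv ℝ k V (b 0 x) fun l ↦ (b - Pi.single 0 (b 0) : ℕ → P → E) (j l) x := by
  let u : ℕ → E := fun i ↦ (b - Pi.single 0 (b 0) : ℕ → P → E) i x
  have hu : u 0 = 0 := by simp [u]
  refine sum_subset_zero_on_sdiff (range_subset_range.2 hi) (fun k hk ↦ ?_) fun k hk ↦ ?_
  · have hik : i < k := by simpa [Nat.lt_succ_iff] using (mem_sdiff.1 hk).2
    exact smul_eq_zero_of_right _ (sum_antidiagonalTuple_eq_zero_of_lt _ hu hik)
  · refine congrArg _ (.trans ?_ (sum_antidiagonalTuple_of_map_zero _ hu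
      (Nat.le_of_lt_succ (mem_range.1 hk))).symm)
    simp [u]

end Multilinear

namespace HasExpansion

variable {m : ℕ} {V : E → F} {γ : ℝ → P → E} {b : ℕ → P → E}

lemma multilinear_apply {k : ℕ} {A : P → E [×k]→L[ℝ] F} (hA : IsTempered A) {u : ℝ → P → E}
    {a : ℕ → P → E} (hu : HasExpansion m u a) :
    HasExpansion m (fun θ x ↦ A x fun _ ↦ u θ x)
      fun i x ↦ ∑ j ∈ Nat.antidiagonalTuple k i, A x fun l ↦ a (j l) x := by
  refine ⟨fun i hi ↦ .sum _ fun j hj ↦ hA.multilinear_apply fun l ↦ hu.isTempered_coeff _ ?_, ?_⟩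
  · rw [Nat.mem_antidiagonalTuple] at hj
    exact (single_le_sum (fun _ _ ↦ Nat.zero_le _) (mem_univ l)).trans_lt (hj.trans_lt hi)
  have hreplace := hA.isTemperedBigO.multilinear_apply_sub hu.isTemperedBigO
    (isTemperedBigO_sum hu.isTempered_coeff) hu.isTemperedBigO_sub
  rw [zero_add] at hreplace
  have htail : IsTemperedBigO m fun θ x ↦
      ∑ j ∈ Fintype.piFinset fun _ : Fin k ↦ range m with ¬ ∑ l, j l < m,
        θ ^ (∑ l, j l) • A x fun l ↦ a (j l) x := by
    refine .sum _ fun j hj ↦ ?_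
    obtain ⟨hmem, hdeg⟩ := mem_filter.1 hj
    refine ((hA.multilinear_apply fun l ↦ hu.isTempered_coeff _ ?_).isTemperedBigO.pow_smul
      (∑ l, j l)).mono (not_lt.1 hdeg)
    exact mem_range.1 (Fintype.mem_piFinset.1 hmem l)
  convert hreplace.add htail using 3 with θ x
  rw [← multilinear_sum_pow_smul_sub (A x) fun i ↦ a i x, sub_add_sub_cancel]

lemma sub_coeff_zero (hγ : HasExpansion (m + 1) γ b) :
    HasExpansion (m + 1) (fun θ x ↦ γ θ x - b 0 x) (b - Pi.single 0 (b 0) : ℕ → P → E) :=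
  hγ.sub (.const (hγ.isTempered_coeff 0 m.succ_pos) _)

lemma isTemperedBigO_comp_sub_taylor [CompleteSpace F] (hγ : HasExpansion (m + 1) γ b)
    (hV : HasTemperedDeriv (m + 1) V) :
    IsTemperedBigO (m + 1) fun θ x ↦ V (γ θ x) - ∑ k ∈ range (m + 1),
      (k.factorial : ℝ)⁻¹ • iteratedFDeriv ℝ k V (b 0 x) fun _ ↦ γ θ x - b 0 x := by
  have hb0 := (hγ.isTempered_coeff 0 m.succ_pos).isTemperedBigO
  have hdiff : IsTemperedBigO 1 fun θ x ↦ γ θ x - b 0 x := by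
    simpa using (hγ.of_le (Nat.le_add_left 1 m)).isTemperedBigO_sub
  obtain ⟨B, hB, hbound⟩ := hV.hasPolyGrowth.exists_isTemperedBigO_bound
    (hb0.norm.add (hdiff.mono zero_le_one).norm)
  refine IsTemperedBigO.of_norm_le
    (by simpa using hB.smul (hdiff.norm.pow (m + 1))) fun θ x ↦ ?_
  have htaylor := norm_sub_sum_iteratedFDeriv_le (x := b 0 x) (y := γ θ x - b 0 x)
    (by exact_mod_cast hV.contDiff) fun t ht ↦ hbound θ x _ <|
      calc ‖b 0 x + t • (γ θ x - b 0 x)‖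
          ≤ ‖b 0 x‖ + ‖t • (γ θ x - b 0 x)‖ := norm_add_le _ _
        _ ≤ ‖b 0 x‖ + ‖γ θ x - b 0 x‖ := by
          rw [norm_smul, Real.norm_of_nonneg ht.1]
          gcongr
          exact mul_le_of_le_one_left (norm_nonneg _) ht.2
  rw [add_sub_cancel] at htaylor
  exact htaylor.trans (le_abs_self _)

theorem comp [CompleteSpace F] (hγ : HasExpansion m γ b) (hV : HasTemperedDeriv m V) :
    HasExpansion m (fun θ x ↦ V (γ θ x)) (compCoeff V b) := by
  cases m with
  | zero =>
    refine ⟨fun i hi ↦ absurd hi i.not_lt_zero, ?_⟩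
    simpa using hV.isTempered.hasPolyGrowth.comp_isTemperedBigO hγ.isTemperedBigO
  | succ m =>
    have htaylor := HasExpansion.sum (range (m + 1)) fun k hk ↦
      .const_smul (k.factorial : ℝ)⁻¹ <| .multilinear_apply
        ((hV.isTempered_iteratedFDeriv (mem_range.1 hk).le).comp
          (hγ.isTempered_coeff 0 m.succ_pos)) hγ.sub_coeff_zero
    refine ⟨fun i hi ↦ ?_, ?_⟩
    · convert htaylor.isTempered_coeff i hi using 2 with x
      exact compCoeff_eq_sum_range V b hi x
    · convert (hγ.isTemperedBigO_comp_sub_taylor hV).add htaylor.isTemperedBigO_sub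
        using 3 with θ x
      rw [sub_add_sub_cancel]
      congr 1
      exact sum_congr rfl fun i hi ↦ congrArg _ (compCoeff_eq_sum_range V b (mem_range.1 hi) x)

end HasExpansion

end Expansion

section Flow

open Finset

variable {E : Type*} [NormedAddCommGroup E] [NormedSpace ℝ E]

/-- The coefficients of `x + ∑ i, θ ^ (i + 1) • w i • c i x`: the shape shared by Runge–Kutta stages
(`w` constant) and integrals in time (`w i = 1 / (i + 1)`). -/
def stepCoeff (w : ℕ → ℝ) (c : ℕ → E → E) : ℕ → E → E
  | 0 => fun x ↦ x
  | i + 1 => w i • c i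

lemma sum_pow_smul_stepCoeff (w : ℕ → ℝ) (c : ℕ → E → E) (m : ℕ) (θ : ℝ) (x : E) :
    ∑ i ∈ range (m + 1), θ ^ i • stepCoeff w c i x
      = x + ∑ i ∈ range m, θ ^ (i + 1) • w i • c i x := by
  simp [sum_range_succ', stepCoeff, add_comm]

namespace HasExpansion

variable {m : ℕ} {c : ℕ → E → E}

lemma isTempered_stepCoeff {f : ℝ → E → E} (hf : HasExpansion m f c) (w : ℕ → ℝ) :
    ∀ i < m + 1, IsTempered (stepCoeff w c i)
  | 0, _ => .id
  | i + 1, hi => (hf.isTempered_coeff i (Nat.lt_of_succ_lt_succ hi)).const_smul (w i)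

lemma add_smul {K : ℝ → E → E} (hK : HasExpansion m K c) (a : ℝ) :
    HasExpansion (m + 1) (fun θ x ↦ x + (θ * a) • K θ x) (stepCoeff (fun _ ↦ a) c) := by
  refine ⟨hK.isTempered_stepCoeff _, ?_⟩
  convert (hK.isTemperedBigO_sub.const_smul a).pow_smul 1 using 1
  · rw [add_comm]
  · ext θ x
    simp [sum_pow_smul_stepCoeff, smul_sub, smul_sum, smul_smul, pow_succ', mul_assoc,
      mul_comm a]

lemma of_hasDerivAt {y f : ℝ → E → E} (hf : HasExpansion m f c) (hy0 : ∀ x, y 0 x = x)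
    (hy : ∀ θ x, HasDerivAt (fun s ↦ y s x) (f θ x) θ) :
    HasExpansion (m + 1) y (stepCoeff (fun i ↦ ((i : ℝ) + 1)⁻¹) c) := by
  refine ⟨hf.isTempered_stepCoeff _, ?_⟩
  obtain ⟨C, hC, r, hbound⟩ := hf.isTemperedBigO_sub
  refine ⟨C, hC, r, fun θ x ↦ ?_⟩
  simp only [sum_pow_smul_stepCoeff]
  have hderiv : ∀ t, HasDerivAt
      (fun s ↦ y s x - (x + ∑ i ∈ range m, s ^ (i + 1) • ((i : ℝ) + 1)⁻¹ • c i x))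
      (f t x - ∑ i ∈ range m, t ^ i • c i x) t := fun t ↦ by
    refine (hy t x).sub (.const_add x (.fun_sum fun i _ ↦ ?_))
    convert (hasDerivAt_pow (i + 1) t).smul_const (((i : ℝ) + 1)⁻¹ • c i x) using 1
    rw [smul_smul]
    congr 1
    push_cast
    field_simp
  have hball : ∀ t ∈ Metric.closedBall (0 : ℝ) |θ|,
      ‖f t x - ∑ i ∈ range m, t ^ i • c i x‖ ≤ C * |θ| ^ m * temperedWeight θ x ^ r := fun t ht ↦ by
    have hle : |t| ≤ |θ| := by simpa using ht
    have hweight := temperedWeight_mono hle x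
    have hpos := (zero_le_one.trans (one_le_temperedWeight t x))
    exact (hbound t x).trans (by gcongr)
  have hmean := (convex_closedBall (0 : ℝ) |θ|).norm_image_sub_le_of_norm_hasDerivWithin_le
    (fun t _ ↦ (hderiv t).hasDerivWithinAt) hball (x := 0) (by simp) (y := θ) (by simp)
  calc _ ≤ C * |θ| ^ m * temperedWeight θ x ^ r * ‖θ - 0‖ := by simpa [hy0] using hmean
    _ = C * |θ| ^ (m + 1) * temperedWeight θ x ^ r := by
      rw [sub_zero, Real.norm_eq_abs]; ring

end HasExpansion

-- Adjoining a constant coordinate `1` turns the affine growth of the derivative into linear growth.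
lemma norm_le_max_mul_exp {c c' : ℝ → E} {M : ℝ} (hc : ∀ t, HasDerivAt c (c' t) t)
    (hM : ∀ t, ‖c' t‖ ≤ M * max ‖c t‖ 1) (θ : ℝ) :
    ‖c θ‖ ≤ max ‖c 0‖ 1 * Real.exp (M * |θ|) := by
  have hderiv : ∀ t, HasDerivAt (fun s ↦ (c (s * θ), (1 : ℝ))) (θ • c' (t * θ), 0) t := fun t ↦
    ((hc (t * θ)).scomp t (hasDerivAt_mul_const θ)).prodMk (hasDerivAt_const t 1)
  have hgronwall := norm_le_gronwallBound_of_norm_deriv_right_le (a := 0) (b := 1) (K := M * |θ|)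
    (ε := 0) (fun t _ ↦ (hderiv t).continuousAt.continuousWithinAt)
    (fun t _ ↦ (hderiv t).hasDerivWithinAt) le_rfl (fun t _ ↦ ?_) 1 ⟨zero_le_one, le_rfl⟩
  · rw [gronwallBound_ε0] at hgronwall
    simpa [Prod.norm_def] using (norm_fst_le (c (1 * θ), (1 : ℝ))).trans hgronwall
  · calc ‖(θ • c' (t * θ), (0 : ℝ))‖
        = |θ| * ‖c' (t * θ)‖ := by
          rw [Prod.norm_mk, norm_zero, norm_smul, Real.norm_eq_abs, max_eq_left (by positivity)]
      _ ≤ |θ| * (M * max ‖c (t * θ)‖ 1) := by gcongr; exact hM _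
      _ = M * |θ| * ‖(c (t * θ), (1 : ℝ))‖ + 0 := by simp [Prod.norm_def]; ring

variable {V : E → E} {φ : ℝ → E → E}

lemma isTemperedBigO_flow {L : NNReal} (hlip : LipschitzWith L V) (hφ0 : ∀ x, φ 0 x = x)
    (hφ : ∀ x, IsIntegralCurve (fun t ↦ φ t x) fun _ ↦ V) : IsTemperedBigO 0 φ := by
  have hV : ∀ z, ‖V z‖ ≤ (L + ‖V 0‖) * max ‖z‖ 1 := fun z ↦
    calc ‖V z‖ ≤ ‖V z - V 0‖ + ‖V 0‖ := norm_le_norm_sub_add _ _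
      _ ≤ L * ‖z‖ + ‖V 0‖ * 1 := by
        gcongr
        · simpa using hlip.norm_sub_le z 0
        · rw [mul_one]
      _ ≤ L * max ‖z‖ 1 + ‖V 0‖ * max ‖z‖ 1 := by
        gcongr
        exacts [le_max_left _ _, le_max_right _ _]
      _ = (L + ‖V 0‖) * max ‖z‖ 1 := (add_mul _ _ _).symm
  refine ((IsTemperedBigO.id.norm.add (.const 1)).smul
    (.exp_mul_abs (L + ‖V 0‖))).of_norm_le fun θ x ↦ ?_
  calc ‖φ θ x‖ ≤ max ‖φ 0 x‖ 1 * Real.exp ((L + ‖V 0‖) * |θ|) :=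
        norm_le_max_mul_exp (hφ x) (fun t ↦ hV _) θ
    _ ≤ (‖x‖ + 1) * Real.exp ((L + ‖V 0‖) * |θ|) := by
        rw [hφ0]
        gcongr
        exact max_le_add_of_nonneg (norm_nonneg x) zero_le_one
    _ ≤ _ := le_abs_self _

/-- The coefficients of the `m`-th Picard iterate of `y' = V y`, which agree with those of the flow
below order `m`. -/
def picardCoeff (V : E → E) : ℕ → ℕ → E → E
  | 0 => 0
  | m + 1 => stepCoeff (fun i ↦ ((i : ℝ) + 1)⁻¹) (compCoeff V (picardCoeff V m))

theorem hasExpansion_flow [CompleteSpace E] {L : NNReal} {N : ℕ} (hlip : LipschitzWith L V)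
    (hV : HasTemperedDeriv N V) (hφ0 : ∀ x, φ 0 x = x)
    (hφ : ∀ x, IsIntegralCurve (fun t ↦ φ t x) fun _ ↦ V) :
    ∀ m ≤ N + 1, HasExpansion m φ (picardCoeff V m)
  | 0, _ => ⟨fun i hi ↦ absurd hi i.not_lt_zero, by simpa using isTemperedBigO_flow hlip hφ0 hφ⟩
  | m + 1, hm => ((hasExpansion_flow hlip hV hφ0 hφ m (Nat.le_of_succ_le hm)).comp
      (hV.of_le (Nat.le_of_succ_le_succ hm))).of_hasDerivAt hφ0 fun θ x ↦ hφ x θ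

end Flow

section RungeKutta

open Finset

variable {E : Type*} [NormedAddCommGroup E] [NormedSpace ℝ E] {N : ℕ} {V : E → E}

/-- The Runge–Kutta map `rk4` on an arbitrary real normed space. -/
def rungeKutta4 (V : E → E) (θ : ℝ) (x : E) : E :=
  x + (θ / 6) • (V x + (2 : ℝ) • V (x + (θ / 2) • V x)
    + (2 : ℝ) • V (x + (θ / 2) • V (x + (θ / 2) • V x))
    + V (x + θ • V (x + (θ / 2) • V (x + (θ / 2) • V x))))

/-- The coefficients of the stage `V (x + θ • a • K θ x)` when `K` has coefficients `c`. -/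
def stageCoeff (V : E → E) (a : ℝ) (c : ℕ → E → E) : ℕ → E → E :=
  compCoeff V (stepCoeff (fun _ ↦ a) c)

/-- The coefficients of `rungeKutta4 V`. -/
def rk4Coeff (V : E → E) : ℕ → E → E :=
  let k₁ : ℕ → E → E := Pi.single 0 V
  let k₂ := stageCoeff V 2⁻¹ k₁
  let k₃ := stageCoeff V 2⁻¹ k₂
  let k₄ := stageCoeff V 1 k₃
  stepCoeff (fun _ ↦ 6⁻¹) (k₁ + (2 : ℝ) • k₂ + (2 : ℝ) • k₃ + k₄)

lemma HasExpansion.stage [CompleteSpace E] {K : ℝ → E → E} {c : ℕ → E → E}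
    (hV : HasTemperedDeriv N V) (a : ℝ) (hK : HasExpansion N K c) :
    HasExpansion N (fun θ x ↦ V (x + (θ * a) • K θ x)) (stageCoeff V a c) :=
  (hK.add_smul a).of_succ.comp hV

theorem hasExpansion_rungeKutta4 [CompleteSpace E] (hV : HasTemperedDeriv N V) :
    HasExpansion (N + 1) (rungeKutta4 V) (rk4Coeff V) := by
  have hk₁ : HasExpansion N (fun _ ↦ V) (Pi.single 0 V) := .const hV.isTempered N
  have hk₂ := hk₁.stage hV 2⁻¹
  have hk₃ := hk₂.stage hV 2⁻¹
  have hk₄ := hk₃.stage hV 1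
  unfold rungeKutta4 rk4Coeff
  simpa only [div_eq_mul_inv, mul_one] using
    (((hk₁.add (hk₂.const_smul 2)).add (hk₃.const_smul 2)).add hk₄).add_smul 6⁻¹

section OrderConditions

variable (V : E → E) (w : ℕ → ℝ) (c : ℕ → E → E) (x : E)

lemma compCoeff_stepCoeff_zero : compCoeff V (stepCoeff w c) 0 x = V x := by
  simp [compCoeff, stepCoeff]

lemma compCoeff_stepCoeff_one :
    compCoeff V (stepCoeff w c) 1 x = w 0 • fderiv ℝ V x (c 0 x) := by
  simp [compCoeff, stepCoeff, sum_range_succ]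

lemma compCoeff_stepCoeff_two :
    compCoeff V (stepCoeff w c) 2 x = w 1 • fderiv ℝ V x (c 1 x)
      + (2 : ℝ)⁻¹ • w 0 • w 0 • fderiv ℝ (fderiv ℝ V) x (c 0 x) (c 0 x) := by
  simp [compCoeff, stepCoeff, sum_range_succ, Nat.antidiagonalTuple_zero_right,
    iteratedFDeriv_two_apply]

lemma compCoeff_stepCoeff_three :
    compCoeff V (stepCoeff w c) 3 x = w 2 • fderiv ℝ V x (c 2 x)
      + (2 : ℝ)⁻¹ • ((w 0 * w 1) • fderiv ℝ (fderiv ℝ V) x (c 0 x) (c 1 x)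
        + (w 1 * w 0) • fderiv ℝ (fderiv ℝ V) x (c 1 x) (c 0 x))
      + (6 : ℝ)⁻¹ • w 0 ^ 3 • iteratedFDeriv ℝ 3 V x fun _ ↦ c 0 x := by
  have htuples : Nat.antidiagonalTuple 2 1 = {![0, 1], ![1, 0]} := by decide
  simp [compCoeff, stepCoeff, sum_range_succ, Nat.antidiagonalTuple_zero_right, htuples,
    iteratedFDeriv_two_apply, ContinuousMultilinearMap.map_smul_univ, Nat.factorial]

-- Both sides are combinations of the elementary differentials `V`, `V' V`, `V' V' V`, `V'' (V, V)`,
-- `V' V' V' V`, `V' V'' (V, V)`, `V'' (V, V' V)` and `V''' (V, V, V)` with equal weights.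
theorem picardCoeff_eq_rk4Coeff {i : ℕ} (hi : i < 5) : picardCoeff V 6 i = rk4Coeff V i := by
  funext x
  interval_cases i <;>
    simp only [picardCoeff, rk4Coeff, stageCoeff, stepCoeff, compCoeff_stepCoeff_zero,
      compCoeff_stepCoeff_one, compCoeff_stepCoeff_two, compCoeff_stepCoeff_three,
      Pi.add_apply, Pi.smul_apply, Pi.zero_apply, Pi.single_apply, ↓reduceIte, one_ne_zero,
      OfNat.ofNat_ne_zero, map_add, map_smul, map_zero, smul_apply, zero_apply,
      CharP.cast_eq_zero, Nat.cast_one, Nat.cast_ofNat]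
  all_goals module

end OrderConditions

end RungeKutta

section LocalError

variable {E : Type*} [NormedAddCommGroup E] [NormedSpace ℝ E]

theorem exists_isTemperedBigO_flow_sub_rungeKutta4 [CompleteSpace E] {L : NNReal} {V : E → E}
    (hlip : LipschitzWith L V) (hV : HasTemperedDeriv 5 V) {φ : ℝ → E → E}
    (hφ0 : ∀ x, φ 0 x = x) (hφ : ∀ x, IsIntegralCurve (fun t ↦ φ t x) fun _ ↦ V) :
    ∃ h : E → E, IsTempered h ∧
      IsTemperedBigO 6 fun θ x ↦ φ θ x - rungeKutta4 V θ x - θ ^ 5 • h x :=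
  have hdiff := (hasExpansion_flow hlip hV hφ0 hφ 6 le_rfl).sub (hasExpansion_rungeKutta4 hV)
  ⟨_, hdiff.isTempered_coeff 5 (by norm_num), hdiff.isTemperedBigO_sub_of_coeff_eq_zero fun _ hi ↦
    sub_eq_zero.2 (picardCoeff_eq_rk4Coeff V hi)⟩

end LocalError

section GaussianIncrement

lemma integrable_pow_abs_mul_exp_mul_abs_gaussianReal (k : ℕ) {a : ℝ} (ha : 0 ≤ a) (μ : ℝ)
    (v : NNReal) :
    Integrable (fun z ↦ |z| ^ k * Real.exp (a * |z|)) (gaussianReal μ v) := by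
  simpa using integrable_pow_abs_mul_exp_add_of_integrable_exp_mul (X := id) (v := 0) (t := a + 1)
    (integrable_exp_mul_gaussianReal _) (integrable_exp_mul_gaussianReal _) ha
    (by rw [abs_of_nonneg (by positivity)]; exact lt_add_one a) k

lemma gaussianReal_zero_toNNReal_eq_map {θ : ℝ} (hθ : 0 ≤ θ) :
    gaussianReal 0 θ.toNNReal = (gaussianReal 0 1).map (√θ * ·) := by
  rw [gaussianReal_map_const_mul, mul_zero, mul_one]
  congr 1
  ext
  simp [Real.sq_sqrt hθ, hθ]

lemma exists_integral_pow_abs_mul_exp_gaussianReal_le (T : ℝ) (k : ℕ) {a : ℝ} (ha : 0 ≤ a) :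
    ∃ C : ℝ, 0 ≤ C ∧ ∀ θ ∈ Set.Icc (0 : ℝ) T,
      ∫ z, |z| ^ (2 * k) * Real.exp (a * |z|) ∂gaussianReal 0 θ.toNNReal ≤ C * θ ^ k := by
  refine ⟨∫ z, |z| ^ (2 * k) * Real.exp (a * √T * |z|) ∂gaussianReal 0 1,
    integral_nonneg fun z ↦ by positivity, fun θ ⟨hθ0, hθT⟩ ↦ ?_⟩
  rw [gaussianReal_zero_toNNReal_eq_map hθ0, integral_map (by fun_prop) (by fun_prop),
    ← integral_mul_const]
  refine integral_mono_of_nonneg (.of_forall fun z ↦ by positivity)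
    ((integrable_pow_abs_mul_exp_mul_abs_gaussianReal _ (by positivity) 0 1).mul_const _)
    (.of_forall fun z ↦ ?_)
  calc |√θ * z| ^ (2 * k) * Real.exp (a * |√θ * z|)
      = θ ^ k * |z| ^ (2 * k) * Real.exp (a * √θ * |z|) := by
        rw [abs_mul, abs_of_nonneg (Real.sqrt_nonneg θ), mul_pow, pow_mul √θ, Real.sq_sqrt hθ0,
          mul_assoc a]
    _ ≤ θ ^ k * |z| ^ (2 * k) * Real.exp (a * √T * |z|) := by gcongr
    _ = |z| ^ (2 * k) * Real.exp (a * √T * |z|) * θ ^ k := by ring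

theorem IsTemperedBigO.exists_integral_norm_gaussianReal_le {P E : Type*} [NormedAddCommGroup P]
    [NormedAddCommGroup E] {k : ℕ} {f : ℝ → P → E} (hf : IsTemperedBigO (2 * k) f) (T : ℝ) :
    ∃ C : ℝ, 0 < C ∧ ∃ q : ℕ, 1 ≤ q ∧ ∀ θ ∈ Set.Icc (0 : ℝ) T, ∀ x,
      ∫ g, ‖f g x‖ ∂gaussianReal 0 θ.toNNReal ≤ C * (1 + ‖x‖ ^ (2 * q)) * θ ^ k := by
  obtain ⟨B, hB, r, hbound⟩ := hf
  obtain ⟨D, hD, hmoment⟩ := exists_integral_pow_abs_mul_exp_gaussianReal_le T k r.cast_nonneg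
  refine ⟨B * 2 ^ (2 * (r + 1) - 1) * D + 1, by positivity, r + 1, r.succ_pos, fun θ hθ x ↦ ?_⟩
  have hθ0 : 0 ≤ θ := hθ.1
  calc ∫ g, ‖f g x‖ ∂gaussianReal 0 θ.toNNReal
      ≤ ∫ g, B * (1 + ‖x‖) ^ r * (|g| ^ (2 * k) * Real.exp (r * |g|))
          ∂gaussianReal 0 θ.toNNReal := by
        refine integral_mono_of_nonneg (.of_forall fun g ↦ norm_nonneg _)
          ((integrable_pow_abs_mul_exp_mul_abs_gaussianReal _ r.cast_nonneg _ _).const_mul _)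
          (.of_forall fun g ↦ (hbound g x).trans_eq ?_)
        simp only [temperedWeight, mul_pow, Real.exp_nat_mul]
        ring
    _ ≤ B * (2 ^ (2 * (r + 1) - 1) * (1 + ‖x‖ ^ (2 * (r + 1)))) * (D * θ ^ k) := by
        rw [integral_const_mul]
        gcongr
        · exact one_add_pow_le_mul_one_add_pow (norm_nonneg x) (by omega)
        · exact hmoment θ hθ
    _ = B * 2 ^ (2 * (r + 1) - 1) * D * (1 + ‖x‖ ^ (2 * (r + 1))) * θ ^ k := by ring
    _ ≤ (B * 2 ^ (2 * (r + 1) - 1) * D + 1) * (1 + ‖x‖ ^ (2 * (r + 1))) * θ ^ k := by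
        gcongr
        exact le_add_of_nonneg_right zero_le_one

end GaussianIncrement

theorem rk4_gaussian_local_error_general {E : Type*} [NormedAddCommGroup E] [NormedSpace ℝ E]
    [CompleteSpace E] (T : ℝ) (V : E → E) (hLip : ∃ L : NNReal, LipschitzWith L V)
    (hV : HasTemperedDeriv 5 V) (φ : ℝ → E → E) (hφ0 : ∀ x, φ 0 x = x)
    (hφ : ∀ x, IsIntegralCurve (fun t ↦ φ t x) fun _ ↦ V) :
    ∃ h : E → E, Continuous h ∧ HasPolyGrowth h ∧
      ∀ p : ℕ, ∃ C : ℝ, 0 < C ∧ ∃ q : ℕ, 1 ≤ q ∧ ∀ θ ∈ Set.Icc (0 : ℝ) T, ∀ x : E,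
        ∫ g : ℝ, ‖φ g x - rungeKutta4 V g x - g ^ 5 • h x‖ ^ (2 * p) ∂gaussianReal 0 θ.toNNReal
          ≤ C * (1 + ‖x‖ ^ (2 * q)) * θ ^ (6 * p) := by
  obtain ⟨L, hL⟩ := hLip
  obtain ⟨h, hh, hremainder⟩ := exists_isTemperedBigO_flow_sub_rungeKutta4 hL hV hφ0 hφ
  refine ⟨h, hh.continuous, hh.hasPolyGrowth, fun p ↦ ?_⟩
  have hpow := hremainder.norm.pow (2 * p)
  rw [show 2 * p * 6 = 2 * (6 * p) by ring] at hpow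
  simpa only [norm_pow, norm_norm] using hpow.exists_integral_norm_gaussianReal_le T

/-- moment bound for the local error of the fourth-order
Runge–Kutta scheme over a centered Gaussian time increment of variance `θ`. -/
theorem rk4_gaussian_local_error {n : ℕ} (T : ℝ) (hT : 0 < T) (V : Vec n → Vec n)
    (hLip : ∃ L : NNReal, LipschitzWith L V)
    (hC5 : ContDiff ℝ 5 V)
    (hD5 : PolyLocLip (iteratedFDeriv ℝ 5 V))
    (φ : ℝ → Vec n → Vec n) (hφ : IsFlow V φ) :
    ∃ hV : Vec n → Vec n, Continuous hV ∧
      (∃ K : ℝ, 0 ≤ K ∧ ∃ r : ℕ, ∀ x, ‖hV x‖ ≤ K * (1 + ‖x‖ ^ r)) ∧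
      ∀ p : ℕ, 1 ≤ p → ∃ C : ℝ, 0 < C ∧ ∃ q : ℕ, 1 ≤ q ∧
        ∀ θ ∈ Set.Icc (0 : ℝ) T, ∀ x : Vec n,
          ∫ g : ℝ, ‖φ g x - rk4 V g x - g ^ 5 • hV x‖ ^ (2 * p)
              ∂(gaussianReal 0 (Real.toNNReal θ)) ≤
            C * (1 + ‖x‖ ^ (2 * q)) * θ ^ (6 * p) := by
  obtain ⟨h, hcont, hgrowth, hbound⟩ :=
    rk4_gaussian_local_error_general T V hLip ⟨hC5, hD5.hasPolyGrowth⟩ φ hφ.1 hφ.2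
  exact ⟨h, hcont, hgrowth, fun p _ ↦ hbound p⟩
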